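/- Let t ≥ m ≥ 1 and N ≥ 1 be integers and let q ∈ ℂ with 0 < |q| < 1. Then (1 - q^N) · q^{-t} Σ_{0 ≤ k_1 ≤ … ≤ k_t ≤ N, k_m ≥ 1} (q^{1+N};q)_{k_t-1} (q^{1-N};q)_{k_t-1} q^{k_t} Π_{i=1}^{t-1} q^{k_i^2} [ k_{i+1} - k_i - i + Σ_{j=1}^{i} (2 k_j + χ(m > j)) choose k_{i+1} - k_i ]_q = (-1)^N q^{-t + N((2t+1)N+1)/2} Σ_{k=-N}^{N-1} (-1)^k q^{-(2t+1)k(k+1)/2 + m k}. (Both sides are finite sums; all exponents of q are integers. The left side is (1-q^N)·U_t^{(m)}(-q^N; q), expressing that U_t^{(m)}(-q^N;q) equals the analogue J_N^{(t,m)}(q) of the colored Jones polynomial.) -/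

import Mathlib

open Finset

/-- The finite q-Pochhammer symbol `(a;q)_n`. -/
noncomputable def qPoch (q a : ℂ) (n : ℕ) : ℂ := ∏ j ∈ Finset.range n, (1 - a * q ^ j)

/-- The Gaussian binomial coefficient `[n choose k]_q`, zero outside `0 ≤ k ≤ n`. -/
noncomputable def qBinom (q : ℂ) (n k : ℤ) : ℂ :=
  if 0 ≤ k ∧ k ≤ n then
    ∏ j ∈ Finset.range k.toNat, (1 - q ^ (n - k + (j : ℤ) + 1)) / (1 - q ^ ((j : ℤ) + 1))
  else 0

/-- The product
`Π_{i=1}^{T-1} q^{k_i²} [k_{i+1} - k_i - i + Σ_{j=1}^{i}(2k_j + χ(M>j)) choose k_{i+1}-k_i]_q`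
of the vector-valued U-function, for tuples of length `t+1`; the paper's `t, m`
are `t+1, m+1`, so `χ(M > j)` (paper `j`) becomes `χ(j < m)` for 0-based `j`. -/
noncomputable def UtProdM (q : ℂ) (t m : ℕ) (K : Fin (t+1) → ℕ) : ℂ :=
  ∏ i : Fin t, (q ^ (K i.castSucc ^ 2) *
    qBinom q ((K i.succ : ℤ) - (K i.castSucc : ℤ) - ((i : ℕ) + 1)
        + ∑ j ∈ Finset.univ.filter (fun j : Fin (t+1) => (j : ℕ) ≤ (i : ℕ)),
            (2 * (K j : ℤ) + if (j : ℕ) < m then 1 else 0))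
      ((K i.succ : ℤ) - (K i.castSucc : ℤ)))

/-! The multisum is evaluated from its outermost index inward. After every summation the summand
keeps the same shape, a sum of shifted cyclotomic weights `(q^N;q⁻¹)_{k+l} (q^{-N};q⁻¹)_{k+l}`
against a sequence `β l`: expanding the Gaussian binomial by the `q`-binomial theorem leaves a sum
that merely reproduces the weight, while `β` undergoes one step of the Bailey chain with base `q⁻¹`,
relative to `q⁻¹` as long as the index carries no `χ` and relative to `1` afterwards. The chain
starts at the unit Bailey pair and so produces theta coefficients, which are finally paired with the
weights: in the interior `|r| < N` the pairing is constant, and the contributions of `r = ±N`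
combine with the correction coming from `k_m ≥ 1`. -/

/-- The triangular number `k(k-1)/2`, extending `Nat.choose k 2` to integers `k`; it is the exponent
of `q` in theta-like series. The division is exact. -/
def tri (k : ℤ) : ℤ := k * (k - 1) / 2

/-- The reciprocal `1 / (x;x)_n`, with value `0` for `n < 0`, so that sums over its argument are
automatically restricted to their natural range. -/
noncomputable def qPochInv (x : ℂ) (n : ℤ) : ℂ :=
  if 0 ≤ n then (qPoch x x n.toNat)⁻¹ else 0

theorem two_mul_tri (k : ℤ) : 2 * tri k = k * (k - 1) :=
  Int.mul_ediv_cancel' (Int.even_mul_pred_self k).two_dvd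

theorem tri_add_one (k : ℤ) : tri (k + 1) = tri k + k := by
  linarith [two_mul_tri k, two_mul_tri (k + 1)]

theorem qPoch_zero (q a : ℂ) : qPoch q a 0 = 1 := prod_range_zero _

theorem qPoch_succ (q a : ℂ) (n : ℕ) : qPoch q a (n + 1) = qPoch q a n * (1 - a * q ^ n) :=
  prod_range_succ _ n

theorem qPoch_add (q a : ℂ) (m n : ℕ) :
    qPoch q a (m + n) = qPoch q a m * qPoch q (a * q ^ m) n := by
  simp only [qPoch, prod_range_add, pow_add, mul_assoc]

theorem qPoch_succ' (q a : ℂ) (n : ℕ) : qPoch q a (n + 1) = (1 - a) * qPoch q (a * q) n := by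
  rw [add_comm, qPoch_add, qPoch_succ, qPoch_zero, pow_zero, pow_one, mul_one, one_mul]

section Pochhammer

variable {x : ℂ}

theorem qPoch_zpow_neg_eq_zero (hx0 : x ≠ 0) {n k : ℕ} (h : n < k) :
    qPoch x (x ^ (-(n : ℤ))) k = 0 := by
  refine prod_eq_zero (mem_range.2 h) ?_
  rw [zpow_neg, zpow_natCast, inv_mul_cancel₀ (pow_ne_zero n hx0), sub_self]

theorem not_isOfFinOrder_inv (hx : ¬IsOfFinOrder x) : ¬IsOfFinOrder x⁻¹ := by
  simpa only [isOfFinOrder_iff_pow_eq_one, inv_pow, inv_eq_one] using hx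

theorem one_sub_pow_ne_zero (hx : ¬IsOfFinOrder x) {n : ℕ} (hn : n ≠ 0) : 1 - x ^ n ≠ 0 :=
  fun h ↦ hx (isOfFinOrder_iff_pow_eq_one.2 ⟨n, Nat.pos_of_ne_zero hn, (sub_eq_zero.1 h).symm⟩)

theorem one_sub_zpow_ne_zero (hx : ¬IsOfFinOrder x) {n : ℤ} (hn : n ≠ 0) : 1 - x ^ n ≠ 0 := by
  rcases Int.eq_nat_or_neg n with ⟨k, rfl | rfl⟩
  · simpa only [zpow_natCast] using one_sub_pow_ne_zero hx (n := k) (by omega)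
  · simpa only [zpow_neg, zpow_natCast, inv_pow] using
      one_sub_pow_ne_zero (not_isOfFinOrder_inv hx) (n := k) (by omega)

theorem qPoch_self_ne_zero (hx : ¬IsOfFinOrder x) (n : ℕ) : qPoch x x n ≠ 0 := by
  refine prod_ne_zero_iff.2 fun j _ ↦ ?_
  rw [← pow_succ']
  exact one_sub_pow_ne_zero hx j.succ_ne_zero

theorem qPochInv_natCast (n : ℕ) : qPochInv x n = (qPoch x x n)⁻¹ := by
  simp only [qPochInv, Nat.cast_nonneg, if_true, Int.toNat_natCast]

theorem qPochInv_of_neg {n : ℤ} (h : n < 0) : qPochInv x n = 0 := if_neg h.not_ge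

theorem qPochInv_zero : qPochInv x 0 = 1 := by
  rw [← Nat.cast_zero, qPochInv_natCast, qPoch_zero, inv_one]

theorem qPochInv_mul_one_sub_zpow (hx : ¬IsOfFinOrder x) (n : ℤ) :
    qPochInv x n * (1 - x ^ n) = qPochInv x (n - 1) := by
  rcases lt_trichotomy n 0 with h | rfl | h
  · rw [qPochInv_of_neg h, qPochInv_of_neg (by omega), zero_mul]
  · rw [zpow_zero, sub_self, mul_zero, qPochInv_of_neg (by omega)]
  · obtain ⟨k, rfl⟩ : ∃ k : ℕ, n = (k + 1 : ℕ) := ⟨(n - 1).toNat, by omega⟩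
    have hk := one_sub_pow_ne_zero hx k.succ_ne_zero
    rw [show ((k + 1 : ℕ) : ℤ) - 1 = k by push_cast; ring, qPochInv_natCast, qPochInv_natCast,
      qPoch_succ, ← pow_succ', zpow_natCast, mul_inv, mul_assoc, inv_mul_cancel₀ hk, mul_one]

theorem qPochInv_succ_mul_one_sub_pow (hx : ¬IsOfFinOrder x) (n : ℕ) :
    qPochInv x (n + 1 : ℕ) * (1 - x ^ (n + 1)) = qPochInv x n := by
  rw [← zpow_natCast, qPochInv_mul_one_sub_zpow hx, Nat.cast_add_one, add_sub_cancel_right]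

theorem qPochInv_sub_natCast (hx0 : x ≠ 0) (hx : ¬IsOfFinOrder x) (A : ℤ) (i : ℕ) :
    qPochInv x (A - i) =
      qPochInv x A * qPoch x (x ^ (-A)) i * ((-1) ^ i * x ^ (A * i - tri i)) := by
  induction i with
  | zero => simp [qPoch_zero, tri]
  | succ i ih =>
    have hinv : x ^ (A - i) * (x ^ (-A) * x ^ i) = 1 := by
      rw [← zpow_natCast, ← zpow_add₀ hx0, ← zpow_add₀ hx0, ← zpow_zero x]
      congr 1
      ring
    have hexp : x ^ (A * (i + 1 : ℕ) - tri (i + 1 : ℕ)) = x ^ (A * i - tri i) * x ^ (A - i) := by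
      rw [← zpow_add₀ hx0]
      congr 1
      push_cast
      rw [tri_add_one]
      ring
    rw [Nat.cast_succ, ← sub_sub, ← qPochInv_mul_one_sub_zpow hx, ih, ← Nat.cast_succ, hexp,
      qPoch_succ, pow_succ]
    linear_combination (-qPochInv x A * qPoch x (x ^ (-A)) i * (-1) ^ i * x ^ (A * i - tri i)) *
      hinv

theorem qPoch_mul_qPochInv_add (hx0 : x ≠ 0) (hx : ¬IsOfFinOrder x) (A : ℤ) (i : ℕ) :
    qPoch x (x ^ (A + 1)) i * qPochInv x (A + i) = qPochInv x A := by
  induction i with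
  | zero => simp [qPoch_zero]
  | succ i ih =>
    have h := qPochInv_mul_one_sub_zpow hx (A + i + 1)
    rw [add_sub_cancel_right] at h
    rw [← ih, ← h, qPoch_succ, ← zpow_natCast x i, ← zpow_add₀ hx0, Nat.cast_succ, ← add_assoc,
      add_right_comm A 1]
    ring

theorem qPochInv_inv (hx0 : x ≠ 0) (hx : ¬IsOfFinOrder x) (i : ℕ) :
    qPochInv x⁻¹ i = (-1) ^ i * x ^ tri (i + 1) * qPochInv x i := by
  induction i with
  | zero => simp [qPochInv_zero, tri]
  | succ i ih =>
    have hne : 1 - x ^ (i + 1) ≠ 0 := one_sub_pow_ne_zero hx i.succ_ne_zero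
    have hinv := qPochInv_succ_mul_one_sub_pow (not_isOfFinOrder_inv hx) i
    have hpow : x ^ (i + 1) * x⁻¹ ^ (i + 1) = 1 := by
      rw [← mul_pow, mul_inv_cancel₀ hx0, one_pow]
    rw [ih, ← qPochInv_succ_mul_one_sub_pow hx i, Nat.cast_add_one] at hinv
    rw [tri_add_one, zpow_add₀ hx0, zpow_natCast, pow_succ, Nat.cast_add_one]
    refine mul_right_cancel₀ hne ?_
    linear_combination (-x ^ (i + 1)) * hinv - qPochInv x⁻¹ (i + 1) * hpow

/-- The finite form of the product of Euler's expansions of `(zqt;q)_∞` and `1 / (t;q)_∞`. -/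
theorem sum_pow_mul_qPochInv_inv_mul_qPochInv (hx0 : x ≠ 0) (hx : ¬IsOfFinOrder x) (z : ℂ)
    (n : ℕ) :
    ∑ i ∈ range (n + 1), z ^ i * qPochInv x⁻¹ i * qPochInv x (n - i) =
      qPoch x (z * x) n * qPochInv x n := by
  induction n with
  | zero => simp [qPoch_zero, qPochInv_zero]
  | succ n ih =>
    have hsplit (i : ℕ) : z ^ i * qPochInv x⁻¹ i * qPochInv x ((n + 1 : ℕ) - i) *
        (1 - x ^ (n + 1)) = z ^ i * qPochInv x⁻¹ i * qPochInv x (n - i) -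
          x ^ (n + 1) * (z ^ i * qPochInv x⁻¹ (i - 1) * qPochInv x ((n + 1 : ℕ) - i)) := by
      have h₁ := qPochInv_mul_one_sub_zpow hx ((n + 1 : ℕ) - i)
      have h₂ := qPochInv_mul_one_sub_zpow (not_isOfFinOrder_inv hx) i
      rw [show ((n + 1 : ℕ) : ℤ) - i - 1 = n - i by push_cast; ring] at h₁
      rw [← h₁, ← h₂, zpow_sub₀ hx0]
      simp only [zpow_natCast, inv_pow]
      field_simp
      ring
    have hlow : ∑ i ∈ range (n + 2), z ^ i * qPochInv x⁻¹ i * qPochInv x (n - i) =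
        qPoch x (z * x) n * qPochInv x n := by
      rw [sum_range_succ, ih, qPochInv_of_neg (n := n - (n + 1 : ℕ)) (by omega), mul_zero, add_zero]
    have hshift : ∑ i ∈ range (n + 2), z ^ i * qPochInv x⁻¹ (i - 1) * qPochInv x ((n + 1 : ℕ) - i) =
        z * (qPoch x (z * x) n * qPochInv x n) := by
      rw [sum_range_succ', qPochInv_of_neg (n := (0 : ℕ) - 1) (by omega), mul_zero, zero_mul,
        add_zero, ← ih, mul_sum]
      refine sum_congr rfl fun i _ ↦ ?_
      rw [Nat.cast_succ, Nat.cast_succ, add_sub_cancel_right, add_sub_add_right_eq_sub]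
      ring
    refine mul_right_cancel₀ (one_sub_pow_ne_zero hx n.succ_ne_zero) ?_
    rw [sum_mul, sum_congr rfl fun i _ ↦ hsplit i, sum_sub_distrib, ← mul_sum, hlow, hshift,
      mul_assoc, qPochInv_succ_mul_one_sub_pow hx, qPoch_succ]
    ring

/-- The case `c = 0` of the `q`-Chu-Vandermonde sum. -/
theorem sum_qPoch_mul_qPoch_zpow_neg (hx0 : x ≠ 0) (hx : ¬IsOfFinOrder x) (a : ℂ) (n : ℕ) :
    ∑ i ∈ range (n + 1), qPoch x a i * qPoch x (x ^ (-(n : ℤ))) i * x ^ i * qPochInv x i =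
      a ^ n := by
  induction n generalizing a with
  | zero => simp [qPoch_zero, qPochInv_zero]
  | succ n ih =>
    set b := x ^ (-(n : ℤ)) with hb
    have hb' : x ^ (-((n + 1 : ℕ) : ℤ)) * x = b := by
      rw [hb, ← zpow_add_one₀ hx0]
      congr 1
      push_cast
      ring
    have hbn : b * x ^ n = 1 := by
      rw [hb, zpow_neg, zpow_natCast, inv_mul_cancel₀ (pow_ne_zero n hx0)]
    have hdiff (i : ℕ) : qPoch x a (i + 1) * qPoch x (x ^ (-((n + 1 : ℕ) : ℤ))) (i + 1) *
        x ^ (i + 1) * qPochInv x (i + 1 : ℕ) =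
        qPoch x a (i + 1) * qPoch x b (i + 1) * x ^ (i + 1) * qPochInv x (i + 1 : ℕ) -
          (1 - a) * b * (qPoch x (a * x) i * qPoch x b i * x ^ i * qPochInv x i) := by
      rw [← qPochInv_succ_mul_one_sub_pow hx i, qPoch_succ' x (x ^ (-((n + 1 : ℕ) : ℤ))) i,
        qPoch_succ' x a i, qPoch_succ x b i, hb', ← hb']
      ring
    have hfull : ∑ i ∈ range (n + 2), qPoch x a i * qPoch x b i * x ^ i * qPochInv x i = a ^ n := by
      rw [sum_range_succ, ih, hb, qPoch_zpow_neg_eq_zero hx0 n.lt_succ_self]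
      ring
    rw [sum_range_succ'] at hfull ⊢
    rw [sum_congr rfl fun i _ ↦ hdiff i, sum_sub_distrib, ← mul_sum, ih]
    simp only [qPoch_zero] at hfull ⊢
    linear_combination hfull - (1 - a) * a ^ n * hbn

end Pochhammer

section BaileyChain

variable {x : ℂ}

/- Reversing the sum `∑ qPochInv (A - i) * qPochInv i * …` turns it into a `q`-Chu-Vandermonde sum
with parameters `x ^ (-A)` and `x ^ (-B)`, which terminates at the smaller of `A` and `B`. -/
theorem sum_zpow_mul_qPochInv_mul_qPochInv (hx0 : x ≠ 0) (hx : ¬IsOfFinOrder x) {A B : ℤ} {n : ℕ}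
    (h : min A B ≤ n) :
    ∑ i ∈ range (n + 1),
        x ^ ((A - i) * (B - i)) * (qPochInv x i * (qPochInv x (A - i) * qPochInv x (B - i))) =
      qPochInv x A * qPochInv x B := by
  wlog hAB : A ≤ B generalizing A B
  · rw [mul_comm (qPochInv x A), ← this (min_comm A B ▸ h) (le_of_not_ge hAB)]
    simp only [mul_comm (A - _), mul_comm (qPochInv x (A - _))]
  rw [min_eq_left hAB] at h
  rcases lt_or_ge A 0 with hA | hA
  · rw [qPochInv_of_neg hA, zero_mul]
    refine sum_eq_zero fun i _ ↦ ?_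
    rw [qPochInv_of_neg (by omega : A - i < 0), zero_mul, mul_zero, mul_zero]
  lift A to ℕ using hA
  have hterm (i : ℕ) : x ^ ((A - i) * (B - i)) *
      (qPochInv x i * (qPochInv x (A - i) * qPochInv x (B - i))) =
      x ^ (A * B) * (qPochInv x A * qPochInv x B) *
        (qPoch x (x ^ (-B)) i * qPoch x (x ^ (-(A : ℤ))) i * x ^ i * qPochInv x i) := by
    have hexp : x ^ ((A - i) * (B - i)) * (x ^ (A * i - tri i) * x ^ (B * i - tri i)) =
        x ^ (A * B) * x ^ i := by
      rw [← zpow_natCast x i, ← zpow_add₀ hx0, ← zpow_add₀ hx0, ← zpow_add₀ hx0]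
      congr 1
      linarith [two_mul_tri i]
    have hsign : ((-1 : ℂ) ^ i) * (-1) ^ i = 1 := by
      rw [← mul_pow, neg_one_mul, neg_neg, one_pow]
    rw [qPochInv_sub_natCast hx0 hx A i, qPochInv_sub_natCast hx0 hx B i]
    linear_combination (qPochInv x i * qPochInv x A * qPochInv x B * qPoch x (x ^ (-B)) i *
      qPoch x (x ^ (-(A : ℤ))) i) * ((-1) ^ i * (-1) ^ i * hexp + x ^ (A * B) * x ^ i * hsign)
  have htrunc : ∑ i ∈ range (n + 1),
      qPoch x (x ^ (-B)) i * qPoch x (x ^ (-(A : ℤ))) i * x ^ i * qPochInv x i =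
      (x ^ (-B)) ^ A := by
    rw [← sum_qPoch_mul_qPoch_zpow_neg hx0 hx (x ^ (-B)) A]
    refine (sum_subset (range_mono (by omega)) fun i _ hi ↦ ?_).symm
    rw [qPoch_zpow_neg_eq_zero hx0 (by rw [mem_range] at hi; omega), mul_zero,
      zero_mul, zero_mul]
  rw [sum_congr rfl fun i _ ↦ hterm i, ← mul_sum, htrunc, mul_right_comm, ← zpow_natCast,
    ← zpow_mul, ← zpow_add₀ hx0, neg_mul, mul_comm B, add_neg_cancel, zpow_zero, one_mul]

/-- The sequence `β` of the bilateral Bailey pair `(α, β)` relative to `x ^ e`, that is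
`β l = ∑ r, α r / ((x;x)_{l-r} (x;x)_{l+r+e})`, where `r` runs over the integers with
`-l - e ≤ r ≤ l`. -/
noncomputable def baileyTransform (x : ℂ) (e : ℕ) (α : ℤ → ℂ) (l : ℕ) : ℂ :=
  ∑ r ∈ Icc (-(l : ℤ) - e) l, α r * (qPochInv x (l - r) * qPochInv x (l + r + e))

/-- The effect on `β` of one step of the Bailey chain relative to `x ^ e`, in the limit where both
Bailey parameters tend to infinity. -/
noncomputable def baileyStep (x : ℂ) (e : ℕ) (β : ℕ → ℂ) (l : ℕ) : ℂ :=
  ∑ j ∈ range (l + 1), x ^ (j ^ 2 + e * j) * β j * qPochInv x (l - j)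

theorem baileyTransform_eq_sum_of_subset {e l : ℕ} {s : Finset ℤ}
    (hs : Icc (-(l : ℤ) - e) l ⊆ s) (α : ℤ → ℂ) :
    baileyTransform x e α l =
      ∑ r ∈ s, α r * (qPochInv x (l - r) * qPochInv x (l + r + e)) := by
  refine sum_subset hs fun r _ hr ↦ ?_
  rw [mem_Icc, not_and_or, not_le, not_le] at hr
  rcases hr with hr | hr
  · rw [qPochInv_of_neg (by omega : (l : ℤ) + r + e < 0), mul_zero, mul_zero]
  · rw [qPochInv_of_neg (by omega : (l : ℤ) - r < 0), zero_mul, mul_zero]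

theorem baileyStep_baileyTransform (hx0 : x ≠ 0) (hx : ¬IsOfFinOrder x) {e : ℕ} (he : e ≤ 1)
    (α : ℤ → ℂ) :
    baileyStep x e (baileyTransform x e α) =
      baileyTransform x e fun r ↦ x ^ (r ^ 2 + e * r) * α r := by
  funext l
  have hinner (r : ℤ) : ∑ j ∈ range (l + 1), x ^ (j ^ 2 + e * j) *
      (α r * (qPochInv x (j - r) * qPochInv x (j + r + e))) * qPochInv x (l - j) =
      x ^ (r ^ 2 + e * r) * α r * (qPochInv x (l - r) * qPochInv x (l + r + e)) := by
    rw [← sum_zpow_mul_qPochInv_mul_qPochInv hx0 hx (by omega : min ((l : ℤ) - r) (l + r + e) ≤ l),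
      ← sum_range_reflect, mul_sum]
    refine sum_congr rfl fun i hi ↦ ?_
    obtain ⟨j, rfl⟩ := Nat.exists_eq_add_of_le (Nat.lt_succ_iff.1 (mem_range.1 hi))
    have hexp : x ^ (r ^ 2 + e * r) *
        x ^ (((i + j : ℕ) - r - i) * ((i + j : ℕ) + r + e - i)) = x ^ (j ^ 2 + e * j) := by
      rw [← zpow_natCast x (j ^ 2 + e * j), ← zpow_add₀ hx0]
      congr 1
      push_cast
      ring
    rw [show i + j + 1 - 1 - i = j by omega, ← hexp]
    have h₁ : ((i + j : ℕ) : ℤ) - r - i = j - r := by push_cast; ring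
    have h₂ : ((i + j : ℕ) : ℤ) + r + e - i = j + r + e := by push_cast; ring
    have h₃ : ((i + j : ℕ) : ℤ) - j = i := by push_cast; ring
    rw [h₁, h₂, h₃]
    ring
  calc baileyStep x e (baileyTransform x e α) l
      = ∑ j ∈ range (l + 1), ∑ r ∈ Icc (-(l : ℤ) - e) l, x ^ (j ^ 2 + e * j) *
          (α r * (qPochInv x (j - r) * qPochInv x (j + r + e))) * qPochInv x (l - j) := by
        refine sum_congr rfl fun j hj ↦ ?_
        have hsub : Icc (-(j : ℤ) - e) j ⊆ Icc (-(l : ℤ) - e) l := by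
          have := mem_range.1 hj
          exact Icc_subset_Icc (by omega) (by omega)
        rw [baileyTransform_eq_sum_of_subset hsub, mul_sum, sum_mul]
    _ = _ := by
        rw [sum_comm]
        exact sum_congr rfl fun r _ ↦ hinner r

theorem iterate_baileyStep_baileyTransform (hx0 : x ≠ 0) (hx : ¬IsOfFinOrder x) {e : ℕ}
    (he : e ≤ 1) (n : ℕ) (α : ℤ → ℂ) :
    (baileyStep x e)^[n] (baileyTransform x e α) =
      baileyTransform x e fun r ↦ x ^ (n * (r ^ 2 + e * r)) * α r := by
  induction n with
  | zero => simp only [Function.iterate_zero, id_eq, Nat.cast_zero, zero_mul, zpow_zero, one_mul]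
  | succ n ih =>
    rw [Function.iterate_succ_apply', ih, baileyStep_baileyTransform hx0 hx he]
    congr 1
    funext r
    rw [← mul_assoc, ← zpow_add₀ hx0]
    congr 2
    push_cast
    ring

theorem baileyTransform_one_eq_of_antisymm (hx0 : x ≠ 0) (hx : ¬IsOfFinOrder x) {α : ℤ → ℂ}
    (hα : ∀ r, α (-1 - r) = -(x ^ (2 * r + 1) * α r)) :
    baileyTransform x 1 α = baileyTransform x 0 α := by
  funext l
  set f : ℤ → ℂ := fun r ↦ α r * x ^ (l + r + 1) * (qPochInv x (l - r) * qPochInv x (l + r + 1))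
    with hf
  have hcancel : ∑ r ∈ Icc (-(l : ℤ) - (1 : ℕ)) l, f r = 0 := by
    refine sum_involution (fun r _ ↦ -1 - r) (fun r _ ↦ ?_) (fun r _ _ ↦ by omega)
      (fun r hr ↦ ?_) (fun r _ ↦ by ring)
    · have hexp : x ^ (l + (-1 - r) + 1) * x ^ (2 * r + 1) = x ^ (l + r + 1) := by
        rw [← zpow_add₀ hx0]
        congr 1
        ring
      rw [hf]
      dsimp only
      rw [hα, ← hexp, show (l : ℤ) - (-1 - r) = l + r + 1 by ring,
        show (l : ℤ) + (-1 - r) + 1 = l - r by ring]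
      ring
    · rw [mem_Icc] at hr ⊢
      omega
  have hsub : Icc (-(l : ℤ) - (0 : ℕ)) l ⊆ Icc (-(l : ℤ) - (1 : ℕ)) l :=
    Icc_subset_Icc (by omega) le_rfl
  rw [baileyTransform_eq_sum_of_subset hsub, baileyTransform, ← sub_eq_zero, ← sum_sub_distrib,
    ← hcancel]
  refine sum_congr rfl fun r _ ↦ ?_
  have hrec := qPochInv_mul_one_sub_zpow hx (l + r + 1)
  rw [add_sub_cancel_right] at hrec
  rw [Nat.cast_zero, add_zero, Nat.cast_one, ← hrec, hf]
  ring

theorem baileyTransform_neg_one_zpow_mul_zpow_tri (hx0 : x ≠ 0) (hx : ¬IsOfFinOrder x) :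
    baileyTransform x 0 (fun r ↦ (-1) ^ r * x ^ tri r) = Pi.single 0 1 := by
  funext l
  rcases Nat.eq_zero_or_pos l with rfl | hl
  · simp [baileyTransform, tri, qPochInv_zero]
  have hbinom := sum_pow_mul_qPochInv_inv_mul_qPochInv hx0 hx (x ^ (-(l : ℤ) - 1)) (2 * l)
  rw [← zpow_add_one₀ hx0, sub_add_cancel, qPoch_zpow_neg_eq_zero hx0 (by omega : l < 2 * l),
    zero_mul] at hbinom
  rw [Pi.single_eq_of_ne hl.ne', ← mul_zero ((-1) ^ l * x ^ tri (l + 1)), ← hbinom,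
    baileyTransform, mul_sum]
  refine sum_nbij' (fun r ↦ (l + r).toNat) (fun i ↦ (i : ℤ) - l) ?_ ?_ ?_ ?_ fun r hr ↦ ?_
  · intro r hr
    rw [mem_Icc] at hr
    rw [mem_range]
    omega
  · intro i hi
    rw [mem_range] at hi
    rw [mem_Icc]
    omega
  · intro r hr
    rw [mem_Icc] at hr
    omega
  · intro i _
    omega
  obtain ⟨i, hi⟩ : ∃ i : ℕ, l + r = i := ⟨(l + r).toNat, by rw [mem_Icc] at hr; omega⟩
  obtain rfl : r = i - l := by omega
  have hsign : (-1 : ℂ) ^ ((i : ℤ) - l) = (-1) ^ l * (-1) ^ i := by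
    rw [zpow_sub₀ (neg_ne_zero.2 one_ne_zero), zpow_natCast, zpow_natCast, div_eq_iff (by simp),
      mul_right_comm, ← mul_pow, neg_one_mul, neg_neg, one_pow, one_mul]
  have hexp : x ^ tri (i - l) = x ^ tri (l + 1) * ((x ^ (-(l : ℤ) - 1)) ^ i * x ^ tri (i + 1)) := by
    rw [← zpow_natCast _ i, ← zpow_mul, ← zpow_add₀ hx0, ← zpow_add₀ hx0]
    congr 1
    linarith [two_mul_tri (i - l), two_mul_tri (l + 1), two_mul_tri (i + 1)]
  rw [add_sub_cancel, Int.toNat_natCast, qPochInv_inv hx0 hx, hsign, hexp, Nat.cast_zero, add_zero,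
    show (l : ℤ) - (i - l) = (2 * l : ℕ) - i by push_cast; ring]
  ring

/-- The coefficients `(-1) ^ r * x ^ (r(r-1)/2 + b(r²+r) + ar²)`, obtained from those of the unit
Bailey pair after `b` steps relative to `x` and `a` steps relative to `1`. -/
noncomputable def thetaCoeff (x : ℂ) (a b : ℕ) (r : ℤ) : ℂ :=
  (-1) ^ r * x ^ (tri r + b * (r ^ 2 + r) + a * r ^ 2)

theorem thetaCoeff_neg_one_sub (hx0 : x ≠ 0) (b : ℕ) (r : ℤ) :
    thetaCoeff x 0 b (-1 - r) = -(x ^ (2 * r + 1) * thetaCoeff x 0 b r) := by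
  have hsign : (-1 : ℂ) ^ (-1 - r) = -(-1) ^ r := by
    rw [zpow_sub₀ (neg_ne_zero.2 one_ne_zero), zpow_neg_one, div_eq_mul_inv, ← inv_zpow, inv_neg,
      inv_one, neg_one_mul]
  rw [thetaCoeff, thetaCoeff, hsign, mul_left_comm, ← zpow_add₀ hx0, neg_mul]
  congr 3
  rw [Nat.cast_zero]
  linarith [two_mul_tri (-1 - r), two_mul_tri r]

theorem iterate_baileyStep_single (hx0 : x ≠ 0) (hx : ¬IsOfFinOrder x) (a b : ℕ) :
    (baileyStep x 0)^[a] ((baileyStep x 1)^[b] (Pi.single 0 1)) =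
      baileyTransform x 0 (thetaCoeff x a b) := by
  have hunit : baileyTransform x 0 (thetaCoeff x 0 0) = Pi.single 0 1 := by
    rw [← baileyTransform_neg_one_zpow_mul_zpow_tri hx0 hx]
    congr 1
    funext r
    rw [thetaCoeff, Nat.cast_zero, zero_mul, zero_mul, add_zero, add_zero]
  have hone : (baileyStep x 1)^[b] (Pi.single 0 1) = baileyTransform x 0 (thetaCoeff x 0 b) := by
    rw [← hunit, ← baileyTransform_one_eq_of_antisymm hx0 hx (thetaCoeff_neg_one_sub hx0 0),
      iterate_baileyStep_baileyTransform hx0 hx le_rfl,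
      ← baileyTransform_one_eq_of_antisymm hx0 hx (thetaCoeff_neg_one_sub hx0 b)]
    congr 1
    funext r
    rw [thetaCoeff, thetaCoeff, mul_left_comm, ← zpow_add₀ hx0]
    congr 2
    push_cast
    ring
  rw [hone, iterate_baileyStep_baileyTransform hx0 hx zero_le_one]
  congr 1
  funext r
  rw [thetaCoeff, thetaCoeff, mul_left_comm, ← zpow_add₀ hx0]
  congr 2
  push_cast
  ring

end BaileyChain

section CyclotomicPairing

variable {x : ℂ}

/-- The weight `(x ^ N;x)_k (x ^ (-N);x)_k` of cyclotomic expansions. For `k ≥ 1` it is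
`(1 - x ^ N) (1 - x ^ (-N))` times the factor `(x ^ (1 + N);x)_{k-1} (x ^ (1 - N);x)_{k-1}` of the
multisum, and it vanishes for `k > N`. -/
noncomputable def cyclotomicWeight (x : ℂ) (N k : ℕ) : ℂ :=
  qPoch x (x ^ (N : ℤ)) k * qPoch x (x ^ (-(N : ℤ))) k

theorem cyclotomicWeight_zero (x : ℂ) (N : ℕ) : cyclotomicWeight x N 0 = 1 := by
  rw [cyclotomicWeight, qPoch_zero, qPoch_zero, one_mul]

theorem cyclotomicWeight_add (hx0 : x ≠ 0) (N k n : ℕ) :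
    cyclotomicWeight x N (k + n) = cyclotomicWeight x N k *
      (qPoch x (x ^ ((N : ℤ) + k)) n * qPoch x (x ^ (-(N : ℤ) + k)) n) := by
  simp only [cyclotomicWeight, qPoch_add, zpow_add₀ hx0, zpow_natCast]
  ring

theorem cyclotomicWeight_succ (hx0 : x ≠ 0) (N k : ℕ) :
    cyclotomicWeight x N (k + 1) = cyclotomicWeight x N k *
      ((1 - x ^ ((N : ℤ) + k)) * (1 - x ^ (-(N : ℤ) + k))) := by
  simp only [cyclotomicWeight_add hx0, qPoch_succ, qPoch_zero, one_mul, pow_zero, mul_one]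

theorem cyclotomicWeight_succ' (hx0 : x ≠ 0) (N k : ℕ) :
    cyclotomicWeight x N (k + 1) = (1 - x ^ (N : ℤ)) * (1 - x ^ (-(N : ℤ))) *
      (qPoch x (x ^ (1 + (N : ℤ))) k * qPoch x (x ^ (1 - (N : ℤ))) k) := by
  rw [cyclotomicWeight, qPoch_succ', qPoch_succ', add_comm 1 (N : ℤ), sub_eq_neg_add 1 (N : ℤ),
    zpow_add_one₀ hx0, zpow_add_one₀ hx0]
  ring

theorem cyclotomicWeight_eq_zero (hx0 : x ≠ 0) {N k : ℕ} (h : N < k) :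
    cyclotomicWeight x N k = 0 := by
  rw [cyclotomicWeight, qPoch_zpow_neg_eq_zero hx0 h, mul_zero]

theorem pow_sq_mul_cyclotomicWeight_inv (hx0 : x ≠ 0) (N k : ℕ) :
    x ^ k ^ 2 * cyclotomicWeight x⁻¹ N k = cyclotomicWeight x N k * x ^ k := by
  induction k with
  | zero => simp only [cyclotomicWeight_zero, pow_zero, zero_pow two_ne_zero]
  | succ k ih =>
    have hfactor : x ^ (2 * k + 1) * ((1 - x⁻¹ ^ ((N : ℤ) + k)) * (1 - x⁻¹ ^ (-(N : ℤ) + k))) =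
        x * ((1 - x ^ ((N : ℤ) + k)) * (1 - x ^ (-(N : ℤ) + k))) := by
      simp only [inv_zpow, zpow_add₀ hx0, zpow_neg, zpow_natCast]
      field_simp
      ring
    rw [cyclotomicWeight_succ hx0, cyclotomicWeight_succ (inv_ne_zero hx0),
      show (k + 1) ^ 2 = k ^ 2 + (2 * k + 1) by ring, pow_add, pow_succ x k]
    linear_combination (x ^ (2 * k + 1) * ((1 - x⁻¹ ^ ((N : ℤ) + k)) *
      (1 - x⁻¹ ^ (-(N : ℤ) + k)))) * ih + cyclotomicWeight x N k * x ^ k * hfactor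

theorem sum_pow_sq_mul_cyclotomicWeight_inv (hx0 : x ≠ 0) (hx : ¬IsOfFinOrder x) {N K M : ℕ}
    (h : N < K + M) :
    ∑ n ∈ range M, x ^ (K + n) ^ 2 * cyclotomicWeight x⁻¹ N (K + n) * qPochInv x n =
      x ^ N ^ 2 * cyclotomicWeight x⁻¹ N K := by
  rcases lt_or_ge N K with hK | hK
  · rw [cyclotomicWeight_eq_zero (inv_ne_zero hx0) hK, mul_zero]
    refine sum_eq_zero fun n _ ↦ ?_
    rw [cyclotomicWeight_eq_zero (inv_ne_zero hx0) (by omega : N < K + n), mul_zero, zero_mul]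
  obtain ⟨d, rfl⟩ := Nat.exists_eq_add_of_le hK
  have hcast : -((K + d : ℕ) : ℤ) + K = -(d : ℤ) := by push_cast; ring
  have hterm (n : ℕ) : x ^ (K + n) ^ 2 * cyclotomicWeight x⁻¹ (K + d) (K + n) * qPochInv x n =
      cyclotomicWeight x (K + d) K * x ^ K * (qPoch x (x ^ (((K + d : ℕ) : ℤ) + K)) n *
        qPoch x (x ^ (-(d : ℤ))) n * x ^ n * qPochInv x n) := by
    rw [pow_sq_mul_cyclotomicWeight_inv hx0, cyclotomicWeight_add hx0, hcast, pow_add]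
    ring
  have htrunc : ∑ n ∈ range M, qPoch x (x ^ (((K + d : ℕ) : ℤ) + K)) n *
      qPoch x (x ^ (-(d : ℤ))) n * x ^ n * qPochInv x n = (x ^ (((K + d : ℕ) : ℤ) + K)) ^ d := by
    rw [← sum_qPoch_mul_qPoch_zpow_neg hx0 hx]
    refine (sum_subset (range_mono (by omega)) fun n _ hn ↦ ?_).symm
    rw [qPoch_zpow_neg_eq_zero hx0 (by rw [mem_range] at hn; omega), mul_zero, zero_mul, zero_mul]
  rw [sum_congr rfl fun n _ ↦ hterm n, ← mul_sum, htrunc, ← pow_sq_mul_cyclotomicWeight_inv hx0,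
    mul_right_comm, ← Nat.cast_add, zpow_natCast, ← pow_mul, ← pow_add]
  ring

/-- The pairing, truncated at `l ≤ N`, of the cyclotomic weights twisted by `x ^ (c * l)` with the
kernel of the Bailey transform relative to `1`. -/
noncomputable def cyclotomicPairing (x : ℂ) (N c : ℕ) (r : ℤ) : ℂ :=
  ∑ l ∈ range (N + 1),
    cyclotomicWeight x N l * x ^ (c * l) * (qPochInv x (l - r) * qPochInv x (l + r))

theorem sum_cyclotomicWeight_mul_baileyTransform (x : ℂ) (N c : ℕ) (α : ℤ → ℂ) :
    ∑ l ∈ range (N + 1), cyclotomicWeight x N l * x ^ (c * l) * baileyTransform x 0 α l =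
      ∑ r ∈ Icc (-(N : ℤ)) N, α r * cyclotomicPairing x N c r := by
  simp only [cyclotomicPairing, mul_sum]
  rw [sum_comm]
  refine sum_congr rfl fun l hl ↦ ?_
  have hsub : Icc (-(l : ℤ) - (0 : ℕ)) l ⊆ Icc (-(N : ℤ)) N := by
    have := mem_range.1 hl
    exact Icc_subset_Icc (by omega) (by omega)
  rw [baileyTransform_eq_sum_of_subset hsub, mul_sum]
  refine sum_congr rfl fun r _ ↦ ?_
  rw [Nat.cast_zero, add_zero]
  ring

theorem cyclotomicPairing_neg (x : ℂ) (N c : ℕ) (r : ℤ) :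
    cyclotomicPairing x N c (-r) = cyclotomicPairing x N c r := by
  simp only [cyclotomicPairing, sub_neg_eq_add, ← sub_eq_add_neg, mul_comm (qPochInv x (_ + r))]

theorem cyclotomicPairing_natCast_self (x : ℂ) (N c : ℕ) :
    cyclotomicPairing x N c N = x ^ (c * N) * (cyclotomicWeight x N N * qPochInv x (N + N)) := by
  rw [cyclotomicPairing, sum_range_succ, sum_eq_zero fun l hl ↦ ?_, zero_add, sub_self,
    qPochInv_zero]
  · ring
  · have := mem_range.1 hl
    rw [qPochInv_of_neg (by omega : (l : ℤ) - N < 0), zero_mul, mul_zero]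

theorem cyclotomicPairing_one_eq_zero (hx0 : x ≠ 0) (hx : ¬IsOfFinOrder x) {N : ℕ} {r : ℤ}
    (h₁ : r ≠ N) (h₂ : r ≠ -N) : cyclotomicPairing x N 1 r = 0 := by
  set H : ℕ → ℂ := fun l ↦
    cyclotomicWeight x N l * (qPochInv x (l - r - 1) * qPochInv x (l + r - 1)) with hH
  have hfactor : x ^ r * ((1 - x ^ (N - r)) * (1 - x ^ (-N - r))) ≠ 0 :=
    mul_ne_zero (zpow_ne_zero r hx0) (mul_ne_zero (one_sub_zpow_ne_zero hx (by omega))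
      (one_sub_zpow_ne_zero hx (by omega)))
  have hstep (l : ℕ) : cyclotomicWeight x N l * x ^ (1 * l) *
      (qPochInv x (l - r) * qPochInv x (l + r)) *
        (x ^ r * ((1 - x ^ (N - r)) * (1 - x ^ (-N - r)))) = H (l + 1) - H l := by
    have hsub : ((l + 1 : ℕ) : ℤ) - r - 1 = l - r := by push_cast; ring
    have hadd : ((l + 1 : ℕ) : ℤ) + r - 1 = l + r := by push_cast; ring
    rw [hH]
    dsimp only
    rw [hsub, hadd, ← qPochInv_mul_one_sub_zpow hx, ← qPochInv_mul_one_sub_zpow hx (l + r),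
      cyclotomicWeight_succ hx0]
    simp only [zpow_add₀ hx0, zpow_sub₀ hx0, zpow_neg, zpow_natCast, one_mul]
    field_simp
    ring
  have hlast : H (N + 1) = 0 := by
    rw [hH]
    dsimp only
    rw [cyclotomicWeight_eq_zero hx0 N.lt_succ_self, zero_mul]
  have hfirst : H 0 = 0 := by
    rw [hH]
    dsimp only
    rcases lt_or_ge r 0 with hr | hr
    · rw [qPochInv_of_neg (by omega : ((0 : ℕ) : ℤ) + r - 1 < 0), mul_zero, mul_zero]
    · rw [qPochInv_of_neg (by omega : ((0 : ℕ) : ℤ) - r - 1 < 0), zero_mul, mul_zero]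
  refine (mul_eq_zero_iff_right hfactor).1 ?_
  rw [cyclotomicPairing, sum_mul, sum_congr rfl fun l _ ↦ hstep l, sum_range_sub, hlast, hfirst,
    sub_zero]

theorem zpow_mul_cyclotomicPairing_zero_sub (hx0 : x ≠ 0) (hx : ¬IsOfFinOrder x) (N : ℕ) (r : ℤ) :
    x ^ r * (cyclotomicPairing x N 0 r - cyclotomicPairing x N 0 (r + 1)) =
      cyclotomicPairing x N 1 r - x ^ (2 * r + 1) * cyclotomicPairing x N 1 (r + 1) := by
  simp only [cyclotomicPairing, mul_sum, ← sum_sub_distrib]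
  refine sum_congr rfl fun l _ ↦ ?_
  have hrec := qPochInv_mul_one_sub_zpow hx (l + (r + 1))
  rw [← add_assoc, add_sub_cancel_right] at hrec
  rw [← add_assoc, ← hrec, ← sub_sub, ← qPochInv_mul_one_sub_zpow hx (l - r), two_mul]
  simp only [zpow_add₀ hx0, zpow_sub₀ hx0, zpow_natCast, zpow_one, zero_mul, one_mul, pow_zero]
  field_simp
  ring

theorem cyclotomicPairing_zero_of_lt (hx0 : x ≠ 0) (hx : ¬IsOfFinOrder x) {N : ℕ} {r : ℤ}
    (h₁ : -N < r) (h₂ : r < N) :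
    cyclotomicPairing x N 0 r = (1 - x ^ (2 * N)) * cyclotomicPairing x N 0 N := by
  have hdiff (s : ℤ) (hs₁ : -N < s) (hs₂ : s < N) :
      x ^ s * (cyclotomicPairing x N 0 s - cyclotomicPairing x N 0 (s + 1)) =
        -(x ^ (2 * s + 1) * cyclotomicPairing x N 1 (s + 1)) := by
    rw [zpow_mul_cyclotomicPairing_zero_sub hx0 hx,
      cyclotomicPairing_one_eq_zero hx0 hx (r := s) (by omega) (by omega), zero_sub]
  induction r, Int.le_sub_one_of_lt h₂ using Int.leInductionDown with
  | base =>
    have hlast := hdiff (N - 1) h₁ h₂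
    have hexp : x ^ (2 * ((N : ℤ) - 1) + 1) * x ^ N = x ^ ((N : ℤ) - 1) * x ^ (2 * N) := by
      rw [← zpow_natCast, ← zpow_natCast, ← zpow_add₀ hx0, ← zpow_add₀ hx0]
      congr 1
      push_cast
      ring
    rw [sub_add_cancel, cyclotomicPairing_natCast_self x N 1, one_mul] at hlast
    rw [cyclotomicPairing_natCast_self x N 0, zero_mul, pow_zero, one_mul] at hlast ⊢
    refine mul_left_cancel₀ (zpow_ne_zero ((N : ℤ) - 1) hx0) ?_
    linear_combination hlast - cyclotomicWeight x N N * qPochInv x (N + N) * hexp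
  | pred s hs ih =>
    have hstep := hdiff (s - 1) h₁ h₂
    rw [sub_add_cancel, cyclotomicPairing_one_eq_zero hx0 hx (r := s) (by omega) (by omega),
      mul_zero, neg_zero, mul_eq_zero_iff_left (zpow_ne_zero _ hx0), sub_eq_zero] at hstep
    rw [hstep]
    exact ih (by omega) (by omega)

theorem one_sub_pow_mul_cyclotomicPairing_natCast_self (hx0 : x ≠ 0) (hx : ¬IsOfFinOrder x)
    (N : ℕ) :
    (1 - x ^ (2 * N)) * cyclotomicPairing x N 0 N =
      (-1) ^ N * x ^ (-tri (N + 1)) * (1 - x ^ N) := by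
  have hdouble : qPochInv x (N + N) * (1 - x ^ (2 * N)) = qPochInv x (N + N - 1) := by
    rw [← qPochInv_mul_one_sub_zpow hx, two_mul, ← zpow_natCast, Nat.cast_add]
  have hpos : qPoch x (x ^ (N : ℤ)) N * qPochInv x (N + N - 1) = qPochInv x N * (1 - x ^ N) := by
    have h := qPoch_mul_qPochInv_add hx0 hx (N - 1) N
    rwa [sub_add_cancel, ← qPochInv_mul_one_sub_zpow hx, zpow_natCast x N,
      ← add_sub_right_comm] at h
  have hneg : qPochInv x N * qPoch x (x ^ (-(N : ℤ))) N = (-1) ^ N * x ^ (-tri (N + 1)) := by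
    have h := qPochInv_sub_natCast hx0 hx N N
    have hexp : (N : ℤ) * N - tri N = tri (N + 1) := by
      linarith [two_mul_tri N, two_mul_tri (N + 1)]
    rw [sub_self, qPochInv_zero, hexp] at h
    rw [zpow_neg x (tri _), eq_mul_inv_iff_mul_eq₀ (zpow_ne_zero _ hx0)]
    refine mul_left_cancel₀ (pow_ne_zero N (neg_ne_zero.2 one_ne_zero)) ?_
    rw [← mul_pow, neg_one_mul, neg_neg, one_pow]
    linear_combination -h
  rw [cyclotomicPairing_natCast_self, zero_mul, pow_zero, one_mul, cyclotomicWeight]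
  linear_combination (qPoch x (x ^ (N : ℤ)) N * qPoch x (x ^ (-(N : ℤ))) N) * hdouble +
    qPoch x (x ^ (-(N : ℤ))) N * hpos + (1 - x ^ N) * hneg

theorem sum_mul_cyclotomicPairing_one (hx0 : x ≠ 0) (hx : ¬IsOfFinOrder x) {N : ℕ} (hN : N ≠ 0)
    (α : ℤ → ℂ) :
    ∑ r ∈ Icc (-(N : ℤ)) N, α r * cyclotomicPairing x N 1 r =
      x ^ N * cyclotomicPairing x N 0 N * (α N + α (-N)) := by
  rw [sum_eq_add_of_mem (N : ℤ) (-N) (by rw [mem_Icc]; omega) (by rw [mem_Icc]; omega) (by omega)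
    fun r _ hr ↦ by rw [cyclotomicPairing_one_eq_zero hx0 hx hr.1 hr.2, mul_zero],
    cyclotomicPairing_neg, cyclotomicPairing_natCast_self, cyclotomicPairing_natCast_self]
  ring

theorem sum_mul_cyclotomicPairing_zero (hx0 : x ≠ 0) (hx : ¬IsOfFinOrder x) {N : ℕ} (hN : N ≠ 0)
    (α : ℤ → ℂ) :
    ∑ r ∈ Icc (-(N : ℤ)) N, α r * cyclotomicPairing x N 0 r =
      cyclotomicPairing x N 0 N * ((1 - x ^ (2 * N)) * ∑ r ∈ Icc (-(N : ℤ)) (N - 1), α r +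
        (α N + x ^ (2 * N) * α (-N))) := by
  have hlast (f : ℤ → ℂ) :
      ∑ r ∈ Icc (-(N : ℤ)) N, f r = f N + ∑ r ∈ Icc (-(N : ℤ)) (N - 1), f r := by
    rw [← insert_Icc_sub_one_right_eq_Icc (by omega : -(N : ℤ) ≤ N),
      sum_insert (by rw [mem_Icc]; omega)]
  have hfirst (f : ℤ → ℂ) : ∑ r ∈ Icc (-(N : ℤ)) (N - 1), f r =
      f (-N) + ∑ r ∈ Icc (-(N : ℤ) + 1) (N - 1), f r := by
    rw [← insert_Icc_add_one_left_eq_Icc (by omega : -(N : ℤ) ≤ N - 1),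
      sum_insert (by rw [mem_Icc]; omega)]
  have hinner : ∑ r ∈ Icc (-(N : ℤ) + 1) (N - 1), α r * cyclotomicPairing x N 0 r =
      (1 - x ^ (2 * N)) * cyclotomicPairing x N 0 N * ∑ r ∈ Icc (-(N : ℤ) + 1) (N - 1), α r := by
    rw [mul_sum]
    refine sum_congr rfl fun r hr ↦ ?_
    rw [mem_Icc] at hr
    rw [cyclotomicPairing_zero_of_lt hx0 hx (by omega) (by omega), mul_comm]
  rw [hlast, hfirst, hinner, hfirst, cyclotomicPairing_neg]
  ring

theorem thetaCoeff_succ (hx0 : x ≠ 0) (a b : ℕ) (r : ℤ) :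
    thetaCoeff x a (b + 1) r = x ^ (r + (a + 1) * r ^ 2) * thetaCoeff x 0 b r := by
  rw [thetaCoeff, thetaCoeff, mul_left_comm, ← zpow_add₀ hx0]
  congr 2
  push_cast
  ring

theorem sum_thetaCoeff_mul_cyclotomicPairing (hx0 : x ≠ 0) (hx : ¬IsOfFinOrder x) {N : ℕ}
    (hN : N ≠ 0) (a b : ℕ) :
    ∑ r ∈ Icc (-(N : ℤ)) N, thetaCoeff x a (b + 1) r * cyclotomicPairing x N 0 r -
        x ^ ((a + 1) * N ^ 2) *
          ∑ r ∈ Icc (-(N : ℤ)) N, thetaCoeff x 0 b r * cyclotomicPairing x N 1 r =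
      (-1) ^ N * x ^ (-tri (N + 1)) * (1 - x ^ N) *
        ∑ r ∈ Icc (-(N : ℤ)) (N - 1), thetaCoeff x a (b + 1) r := by
  have hpos : thetaCoeff x a (b + 1) N = x ^ ((a + 1) * N ^ 2) * x ^ N * thetaCoeff x 0 b N := by
    rw [thetaCoeff_succ hx0, ← pow_add, ← zpow_natCast]
    congr 2
    push_cast
    ring
  have hneg : x ^ (2 * N) * thetaCoeff x a (b + 1) (-N) =
      x ^ ((a + 1) * N ^ 2) * x ^ N * thetaCoeff x 0 b (-N) := by
    rw [thetaCoeff_succ hx0, ← mul_assoc, ← pow_add, ← zpow_natCast, ← zpow_natCast,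
      ← zpow_add₀ hx0]
    congr 2
    push_cast
    ring
  rw [sum_mul_cyclotomicPairing_zero hx0 hx hN, sum_mul_cyclotomicPairing_one hx0 hx hN, hpos,
    hneg, ← one_sub_pow_mul_cyclotomicPairing_natCast_self hx0 hx]
  ring

end CyclotomicPairing

theorem qBinom_self_add (q : ℂ) (n s : ℕ) :
    qBinom q (n + s) n = qPoch q (q ^ s * q) n * qPochInv q n := by
  rw [qBinom, if_pos (by omega), qPochInv_natCast, Int.toNat_natCast, prod_div_distrib,
    div_eq_mul_inv, add_sub_cancel_left, qPoch, qPoch]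
  congr 1
  · refine prod_congr rfl fun j _ ↦ ?_
    rw [← pow_succ, ← pow_add, ← Nat.cast_add, ← Nat.cast_add_one, zpow_natCast, add_right_comm]
  · congr 1
    refine prod_congr rfl fun j _ ↦ ?_
    rw [← pow_succ', ← Nat.cast_add_one, zpow_natCast]

theorem qBinom_zero_right (q : ℂ) {s : ℤ} (hs : 0 ≤ s) : qBinom q s 0 = 1 := by
  rw [qBinom, if_pos ⟨le_rfl, hs⟩, Int.toNat_zero, prod_range_zero]

section ChainState

variable {q : ℂ}

theorem qBinom_self (hq : ¬IsOfFinOrder q) (n : ℕ) : qBinom q n n = 1 := by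
  have h := qBinom_self_add q n 0
  rwa [Nat.cast_zero, add_zero, pow_zero, one_mul, qPochInv_natCast,
    mul_inv_cancel₀ (qPoch_self_ne_zero hq n)] at h

theorem qBinom_self_add_eq_sum (hq0 : q ≠ 0) (hq : ¬IsOfFinOrder q) {n M : ℕ} (h : n ≤ M) (s : ℕ) :
    qBinom q (n + s) n =
      ∑ i ∈ range (M + 1), q ^ (s * i) * (qPochInv q⁻¹ i * qPochInv q (n - i)) := by
  rw [qBinom_self_add, ← sum_pow_mul_qPochInv_inv_mul_qPochInv hq0 hq]
  simp only [pow_mul, mul_assoc]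
  refine sum_subset (range_mono (by omega)) fun i _ hi ↦ ?_
  rw [mem_range] at hi
  rw [qPochInv_of_neg (by omega : (n : ℤ) - i < 0), mul_zero, mul_zero]

theorem sum_Ico_pow_sq_mul_cyclotomicWeight_inv (hq0 : q ≠ 0) (hq : ¬IsOfFinOrder q) (N l : ℕ)
    {k K : ℕ} (hk : k ≤ K) :
    ∑ y ∈ Ico k (N + 1), q ^ (y + l) ^ 2 * cyclotomicWeight q⁻¹ N (y + l) * qPochInv q (y - K) =
      q ^ N ^ 2 * cyclotomicWeight q⁻¹ N (K + l) := by
  rw [← sum_pow_sq_mul_cyclotomicWeight_inv hq0 hq (by omega : N < K + l + (N + 1 - K)),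
    ← sum_subset (Ico_subset_Ico_left hk) fun y hy hyK ↦ ?_, sum_Ico_eq_sum_range]
  · refine sum_congr rfl fun n _ ↦ ?_
    rw [add_right_comm K n l, Nat.cast_add, add_sub_cancel_left]
  · rw [mem_Ico] at hy hyK
    rw [qPochInv_of_neg (by omega : (y : ℤ) - K < 0), mul_zero]

/-- The value, as a function of the last summation index `k` and of the numerator offset `s` of the
next Gaussian binomial, that the partially summed multisum takes; each summation replaces `β` by a
Bailey step of it. -/
noncomputable def chainState (q : ℂ) (N : ℕ) (β : ℕ → ℂ) (k : ℕ) (s : ℤ) : ℂ :=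
  q ^ k ^ 2 * ∑ l ∈ range (N + 1), cyclotomicWeight q⁻¹ N (k + l) * q ^ (s * l) * β l

theorem chainState_single (hq0 : q ≠ 0) (N k : ℕ) (s : ℤ) :
    chainState q N (Pi.single 0 1) k s = cyclotomicWeight q N k * q ^ k := by
  rw [chainState, sum_eq_single_of_mem 0 (mem_range.2 N.succ_pos) fun l _ hl ↦ ?_,
    ← pow_sq_mul_cyclotomicWeight_inv hq0]
  · simp only [Nat.cast_zero, mul_zero, zpow_zero, Pi.single_eq_same, mul_one, add_zero]
  · rw [Pi.single_eq_of_ne hl, mul_zero]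

theorem chainState_baileyTransform (N c : ℕ) (α : ℤ → ℂ) :
    chainState q N (baileyTransform q⁻¹ 0 α) 0 (-c) =
      ∑ r ∈ Icc (-(N : ℤ)) N, α r * cyclotomicPairing q⁻¹ N c r := by
  rw [← sum_cyclotomicWeight_mul_baileyTransform, chainState, zero_pow two_ne_zero, pow_zero,
    one_mul]
  refine sum_congr rfl fun l _ ↦ ?_
  rw [zero_add, neg_mul, zpow_neg, ← Nat.cast_mul, zpow_natCast, inv_pow]

theorem chainState_add_two_mul_sub (hq0 : q ≠ 0) (N e : ℕ) (β : ℕ → ℂ) (y : ℕ) (s : ℕ) :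
    chainState q N β y (s + 2 * y - e) = ∑ l ∈ range (N + 1),
      q ^ (y + l) ^ 2 * cyclotomicWeight q⁻¹ N (y + l) *
        (q ^ (s * l) * (q⁻¹ ^ (l ^ 2 + e * l) * β l)) := by
  rw [chainState, mul_sum]
  refine sum_congr rfl fun l _ ↦ ?_
  have hexp : q ^ y ^ 2 * q ^ ((s + 2 * y - e : ℤ) * l) =
      q ^ (y + l) ^ 2 * (q ^ (s * l) * q⁻¹ ^ (l ^ 2 + e * l)) := by
    simp only [← zpow_natCast, inv_zpow', ← zpow_add₀ hq0]
    congr 1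
    push_cast
    ring
  linear_combination cyclotomicWeight q⁻¹ N (y + l) * β l * hexp

theorem chainState_baileyStep (hq0 : q ≠ 0) (N e : ℕ) (β : ℕ → ℂ) (k : ℕ) (s : ℕ) :
    chainState q N (baileyStep q⁻¹ e β) k s =
      q ^ k ^ 2 * ∑ l ∈ range (N + 1), ∑ i ∈ range (N + 1), cyclotomicWeight q⁻¹ N (k + i + l) *
        (q ^ (s * l) * (q⁻¹ ^ (l ^ 2 + e * l) * β l)) * (q ^ (s * i) * qPochInv q⁻¹ i) := by
  set f : ℕ → ℕ → ℂ := fun l i ↦ cyclotomicWeight q⁻¹ N (k + i + l) *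
    (q ^ (s * l) * (q⁻¹ ^ (l ^ 2 + e * l) * β l)) * (q ^ (s * i) * qPochInv q⁻¹ i) with hf
  have hdiag (L : ℕ) : cyclotomicWeight q⁻¹ N (k + L) * q ^ ((s : ℤ) * L) * baileyStep q⁻¹ e β L =
      ∑ j ∈ range (L + 1), f j (L - j) := by
    rw [baileyStep, mul_sum]
    refine sum_congr rfl fun j hj ↦ ?_
    obtain ⟨i, rfl⟩ := Nat.exists_eq_add_of_le (Nat.lt_succ_iff.1 (mem_range.1 hj))
    rw [hf]
    dsimp only
    rw [Nat.add_sub_cancel_left, ← Nat.cast_mul, zpow_natCast, Nat.cast_add, add_sub_cancel_left,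
      mul_add, pow_add, ← add_assoc, add_right_comm k j i]
    ring
  have htrunc (l : ℕ) : ∑ i ∈ range (N + 1 - l), f l i = ∑ i ∈ range (N + 1), f l i := by
    refine sum_subset (range_mono (by omega)) fun i _ hi ↦ ?_
    rw [mem_range] at hi
    rw [hf]
    dsimp only
    rw [cyclotomicWeight_eq_zero (inv_ne_zero hq0) (by omega), zero_mul, zero_mul]
  rw [chainState, sum_congr rfl fun L _ ↦ hdiag L, sum_range_diag_flip,
    sum_congr rfl fun l _ ↦ htrunc l]

/- Expanding the Gaussian binomial by the `q`-binomial theorem leaves a sum over `y` that only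
reproduces the cyclotomic weight; the expansion index is the new index of the Bailey step. -/
theorem sum_chainState_mul_qBinom (hq0 : q ≠ 0) (hq : ¬IsOfFinOrder q) (N e : ℕ) (β : ℕ → ℂ)
    (k s : ℕ) :
    q ^ k ^ 2 * ∑ y ∈ Ico k (N + 1),
        chainState q N β y (s + 2 * y - e) * qBinom q (y - k + s) (y - k) =
      q ^ N ^ 2 * chainState q N (baileyStep q⁻¹ e β) k s := by
  set w : ℕ → ℂ := fun l ↦ q ^ (s * l) * (q⁻¹ ^ (l ^ 2 + e * l) * β l)
  have hexpand : ∀ y ∈ Ico k (N + 1),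
      chainState q N β y (s + 2 * y - e) * qBinom q (y - k + s) (y - k) =
        ∑ l ∈ range (N + 1), ∑ i ∈ range (N + 1), w l * (q ^ (s * i) * qPochInv q⁻¹ i) *
          (q ^ (y + l) ^ 2 * cyclotomicWeight q⁻¹ N (y + l) *
            qPochInv q (y - (k + i : ℕ))) := by
    intro y hy
    rw [mem_Ico] at hy
    obtain ⟨n, rfl⟩ := Nat.exists_eq_add_of_le hy.1
    rw [Nat.cast_add k n, add_sub_cancel_left, ← Nat.cast_add k n,
      qBinom_self_add_eq_sum hq0 hq (by omega : n ≤ N), chainState_add_two_mul_sub hq0,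
      sum_mul_sum]
    refine sum_congr rfl fun l _ ↦ sum_congr rfl fun i _ ↦ ?_
    rw [Nat.cast_add k n, Nat.cast_add k i, add_sub_add_left_eq_sub]
    ring
  rw [sum_congr rfl hexpand, sum_comm, chainState_baileyStep hq0, mul_left_comm]
  congr 1
  rw [mul_sum]
  refine sum_congr rfl fun l _ ↦ ?_
  rw [sum_comm, mul_sum]
  refine sum_congr rfl fun i _ ↦ ?_
  rw [← mul_sum, sum_Ico_pow_sq_mul_cyclotomicWeight_inv hq0 hq N l (Nat.le_add_right k i)]
  ring

end ChainState

/-- The summation over the `p`-th index (counted from `0`) of the multisum, whose distinguished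
positive index is the `m`-th. A summand is a function `W` of the index itself and of the numerator
offset that the indices up to it contribute to the next Gaussian binomial; the result is a function
of the preceding index and its offset. -/
noncomputable def chainStep (q : ℂ) (N m p : ℕ) : (ℕ → ℤ → ℂ) →ₗ[ℂ] ℕ → ℤ → ℂ where
  toFun W k s := q ^ k ^ 2 * ∑ y ∈ range (N + 1) with k ≤ y ∧ (p = m → 1 ≤ y),
    W y (s + 2 * y + (if p < m then 1 else 0) - 1) * qBinom q (y - k + s) (y - k)
  map_add' W W' := by
    funext k s
    simp only [Pi.add_apply, add_mul, sum_add_distrib, mul_add]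
  map_smul' c W := by
    funext k s
    simp only [Pi.smul_apply, smul_eq_mul, RingHom.id_apply, mul_assoc, ← mul_sum,
      mul_left_comm _ c]

/-- The multisum over the first `p` indices of a summand `W` that depends on the last of them and on
the numerator offset. -/
noncomputable def chainSum (q : ℂ) (N m : ℕ) : ℕ → (ℕ → ℤ → ℂ) →ₗ[ℂ] ℂ
  | 0 => LinearMap.proj 0 ∘ₗ LinearMap.proj 0
  | p + 1 => chainSum q N m p ∘ₗ chainStep q N m p

theorem chainStep_apply (q : ℂ) (N m p : ℕ) (W : ℕ → ℤ → ℂ) (k : ℕ) (s : ℤ) :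
    chainStep q N m p W k s = q ^ k ^ 2 * ∑ y ∈ range (N + 1) with k ≤ y ∧ (p = m → 1 ≤ y),
      W y (s + 2 * y + (if p < m then 1 else 0) - 1) * qBinom q (y - k + s) (y - k) := rfl

theorem chainSum_zero (q : ℂ) (N m : ℕ) (W : ℕ → ℤ → ℂ) : chainSum q N m 0 W = W 0 0 := rfl

theorem chainSum_succ (q : ℂ) (N m p : ℕ) (W : ℕ → ℤ → ℂ) :
    chainSum q N m (p + 1) W = chainSum q N m p (chainStep q N m p W) := rfl

theorem chainSum_congr (q : ℂ) (N m p : ℕ) {W W' : ℕ → ℤ → ℂ}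
    (h : ∀ k s, 0 ≤ s → (m < p → 1 ≤ k) → W k s = W' k s) :
    chainSum q N m p W = chainSum q N m p W' := by
  induction p generalizing W W' with
  | zero => exact h 0 0 le_rfl (by omega)
  | succ p ih =>
    refine ih fun k s hs hk ↦ ?_
    rw [chainStep_apply, chainStep_apply]
    congr 1
    refine sum_congr rfl fun y hy ↦ ?_
    rw [mem_filter] at hy
    rw [h]
    · split_ifs <;> omega
    · omega

theorem chainSum_ite_zero (q : ℂ) (N : ℕ) {m p : ℕ} (hp : p ≤ m) (h : ℤ → ℂ) :
    chainSum q N m p (fun k s ↦ if k = 0 then h s else 0) = h 0 := by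
  induction p with
  | zero => rw [chainSum_zero, if_pos rfl]
  | succ p ih =>
    rw [chainSum_succ, ← ih (by omega)]
    refine chainSum_congr q N m p fun k s hs _ ↦ ?_
    simp only [chainStep_apply, ite_mul, zero_mul]
    rw [sum_ite_eq' _ 0, if_pos (show p < m by omega)]
    rcases Nat.eq_zero_or_pos k with rfl | hk
    · rw [if_pos (by simp only [mem_filter, mem_range]; omega), if_pos rfl, Nat.cast_zero, sub_zero,
        qBinom_zero_right q (by omega), zero_pow two_ne_zero, pow_zero, one_mul, mul_one, mul_zero,
        add_zero, add_sub_cancel_right]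
    · rw [if_neg (by rw [mem_filter]; omega), if_neg hk.ne', mul_zero]

theorem UtProdM_snoc (q : ℂ) (t m : ℕ) (k : Fin (t + 1) → ℕ) (y : ℕ) :
    UtProdM q (t + 1) m (Fin.snoc k y) = UtProdM q t m k * (q ^ k (Fin.last t) ^ 2 *
      qBinom q (y - k (Fin.last t) +
          (∑ j, (2 * (k j : ℤ) + if (j : ℕ) < m then 1 else 0) - (t + 1)))
        (y - k (Fin.last t))) := by
  rw [UtProdM, Fin.prod_univ_castSucc, UtProdM]
  congr 1
  · refine prod_congr rfl fun i _ ↦ ?_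
    rw [Fin.succ_castSucc, sum_filter, Fin.sum_univ_castSucc, sum_filter]
    simp only [Fin.snoc_castSucc, Fin.val_castSucc, Fin.val_last]
    rw [if_neg (by omega), add_zero]
  · rw [Fin.succ_last, sum_filter, Fin.sum_univ_castSucc]
    simp only [Fin.snoc_castSucc, Fin.snoc_last, Fin.val_castSucc, Fin.val_last,
      Nat.lt_succ_iff.1 (Fin.is_lt _), if_true]
    rw [if_neg (by omega), add_zero]
    congr 2
    ring

theorem sum_univ_snoc {α M : Type*} [Fintype α] [AddCommMonoid M] {n : ℕ}
    (f : (Fin (n + 1) → α) → M) :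
    ∑ k, f k = ∑ k : Fin n → α, ∑ y, f (Fin.snoc k y : Fin (n + 1) → α) := by
  rw [← (Fin.snocEquiv fun _ : Fin (n + 1) ↦ α).sum_comp, Fintype.sum_prod_type_right]
  rfl

theorem snoc_monotone_and_pos_iff {t N m : ℕ} (k : Fin (t + 1) → Fin (N + 1)) (y : Fin (N + 1)) :
    ((∀ i : Fin (t + 1), (Fin.snoc k y : Fin (t + 2) → Fin (N + 1)) i.castSucc ≤
          (Fin.snoc k y : Fin (t + 2) → Fin (N + 1)) i.succ) ∧
        ∀ j : Fin (t + 2), (j : ℕ) = m →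
          1 ≤ ((Fin.snoc k y : Fin (t + 2) → Fin (N + 1)) j : ℕ)) ↔
      ((∀ i : Fin t, k i.castSucc ≤ k i.succ) ∧
          ∀ j : Fin (t + 1), (j : ℕ) = m → 1 ≤ (k j : ℕ)) ∧
        (k (Fin.last t) : ℕ) ≤ y ∧ (t + 1 = m → 1 ≤ (y : ℕ)) := by
  rw [Fin.forall_fin_succ', Fin.forall_fin_succ' (n := t + 1)]
  simp only [Fin.succ_castSucc, Fin.succ_last, Fin.snoc_castSucc, Fin.snoc_last, Fin.val_castSucc,
    Fin.val_last, Fin.le_def]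
  tauto

theorem chainSum_succ_eq_sum {q : ℂ} (hq : ¬IsOfFinOrder q) (N m t : ℕ) (W : ℕ → ℤ → ℂ) :
    chainSum q N m (t + 1) W =
      ∑ k : Fin (t + 1) → Fin (N + 1) with (∀ i : Fin t, k i.castSucc ≤ k i.succ) ∧
          ∀ j : Fin (t + 1), (j : ℕ) = m → 1 ≤ (k j : ℕ),
        W (k (Fin.last t))
            (∑ j, (2 * ((k j : ℕ) : ℤ) + if (j : ℕ) < m then 1 else 0) - (t + 1)) *
          UtProdM q t m fun i ↦ k i := by
  induction t generalizing W with
  | zero =>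
    rw [chainSum_succ, chainSum_zero, chainStep_apply, sum_filter, sum_filter, sum_range,
      ← (Equiv.funUnique (Fin 1) (Fin (N + 1))).symm.sum_comp, zero_pow two_ne_zero, pow_zero,
      one_mul]
    refine sum_congr rfl fun y _ ↦ ?_
    simp [UtProdM, qBinom_self hq, eq_comm]
  | succ t ih =>
    rw [chainSum_succ, ih, sum_filter, sum_filter, sum_univ_snoc (n := t + 1)]
    refine sum_congr rfl fun k _ ↦ ?_
    simp only [snoc_monotone_and_pos_iff, ite_and (_ ∧ _)]
    rw [sum_ite_irrel, sum_const_zero]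
    refine if_congr Iff.rfl ?_ rfl
    rw [chainStep_apply, sum_filter, sum_range, mul_sum, sum_mul]
    refine sum_congr rfl fun y _ ↦ ?_
    rw [mul_ite, mul_zero, ite_mul, zero_mul]
    refine if_congr Iff.rfl ?_ rfl
    have hval : (fun i ↦ ((Fin.snoc k y : Fin (t + 2) → Fin (N + 1)) i : ℕ)) =
        Fin.snoc (fun i ↦ (k i : ℕ)) (y : ℕ) := Fin.comp_snoc Fin.val k y
    rw [hval, UtProdM_snoc, Fin.sum_univ_castSucc (n := t + 1)]
    simp only [Fin.snoc_castSucc, Fin.snoc_last, Fin.val_castSucc, Fin.val_last]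
    have hoff (S c : ℤ) : S + (2 * (y : ℕ) + c) - ((t + 1 : ℕ) + 1) =
        S - (t + 1) + 2 * (y : ℕ) + c - 1 := by
      push_cast
      ring
    rw [hoff]
    ring

section Evaluation

variable {q : ℂ}

theorem sum_filter_le_and_pos (f : ℕ → ℂ) (N m p k : ℕ) :
    ∑ y ∈ range (N + 1) with k ≤ y ∧ (p = m → 1 ≤ y), f y =
      ∑ y ∈ Ico k (N + 1), f y - if p = m ∧ k = 0 then f 0 else 0 := by
  by_cases h : p = m ∧ k = 0
  · rw [if_pos h, h.2, sum_eq_sum_Ico_succ_bot N.succ_pos, add_sub_cancel_left]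
    refine sum_congr ?_ fun _ _ ↦ rfl
    ext y
    rw [mem_filter, mem_range, mem_Ico]
    omega
  · rw [if_neg h, sub_zero]
    refine sum_congr ?_ fun _ _ ↦ rfl
    ext y
    rw [mem_filter, mem_range, mem_Ico]
    omega

theorem chainStep_chainState (hq0 : q ≠ 0) (hq : ¬IsOfFinOrder q) (N m p : ℕ) (β : ℕ → ℂ) (k : ℕ)
    {s : ℤ} (hs : 0 ≤ s) :
    chainStep q N m p (chainState q N β) k s =
      q ^ N ^ 2 * chainState q N (baileyStep q⁻¹ (if p < m then 0 else 1) β) k s -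
        if p = m ∧ k = 0 then chainState q N β 0 (s - 1) else 0 := by
  lift s to ℕ using hs
  have hoff (y : ℕ) : (s : ℤ) + 2 * y + (if p < m then 1 else 0) - 1 =
      s + 2 * y - (if p < m then 0 else 1 : ℕ) := by
    split_ifs <;> push_cast <;> ring
  rw [chainStep_apply, sum_filter_le_and_pos, mul_sub, ← sum_chainState_mul_qBinom hq0 hq]
  simp only [hoff]
  congr 1
  rcases em (p = m ∧ k = 0) with ⟨rfl, rfl⟩ | h
  · rw [if_neg (lt_irrefl p), if_pos ⟨rfl, rfl⟩, if_pos ⟨rfl, rfl⟩, Nat.cast_zero, Nat.cast_one,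
      sub_self, zero_add, qBinom_zero_right q s.cast_nonneg, zero_pow two_ne_zero, pow_zero,
      one_mul, mul_one, mul_zero, add_zero]
  · rw [if_neg h, if_neg h, mul_zero]

/- The subtracted term is the summand with vanishing distinguished index. -/
theorem chainSum_succ_chainState (hq0 : q ≠ 0) (hq : ¬IsOfFinOrder q) (N m p : ℕ) (β : ℕ → ℂ) :
    chainSum q N m (p + 1) (chainState q N β) =
      q ^ N ^ 2 * chainSum q N m p (chainState q N (baileyStep q⁻¹ (if p < m then 0 else 1) β)) -
        if p = m then chainState q N β 0 (-1) else 0 := by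
  rw [chainSum_succ, chainSum_congr q N m p
    (W' := q ^ N ^ 2 • chainState q N (baileyStep q⁻¹ (if p < m then 0 else 1) β) -
      fun k s ↦ if p = m ∧ k = 0 then chainState q N β 0 (s - 1) else 0)
    fun k s hs _ ↦ chainStep_chainState hq0 hq N m p β k hs, map_sub, map_smul, smul_eq_mul]
  congr 1
  rcases eq_or_ne p m with rfl | hpm
  · simp only [true_and, if_true]
    rw [chainSum_ite_zero q N le_rfl fun s ↦ chainState q N β 0 (s - 1), zero_sub]
  · simp only [hpm, false_and, if_false]
    exact map_zero _

theorem chainSum_chainState_of_le (hq0 : q ≠ 0) (hq : ¬IsOfFinOrder q) (N : ℕ) {m p : ℕ}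
    (hp : p ≤ m) (β : ℕ → ℂ) :
    chainSum q N m p (chainState q N β) =
      q ^ (p * N ^ 2) * chainState q N ((baileyStep q⁻¹ 0)^[p] β) 0 0 := by
  induction p generalizing β with
  | zero => rw [chainSum_zero, zero_mul, pow_zero, one_mul, Function.iterate_zero_apply]
  | succ p ih =>
    rw [chainSum_succ_chainState hq0 hq, if_neg (by omega : p ≠ m), sub_zero,
      if_pos (by omega : p < m), ih (by omega), ← mul_assoc, ← pow_add,
      Function.iterate_succ_apply, add_one_mul p, add_comm]

theorem chainSum_add_chainState (hq0 : q ≠ 0) (hq : ¬IsOfFinOrder q) (N m b : ℕ) (β : ℕ → ℂ) :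
    chainSum q N m (m + 1 + b) (chainState q N β) =
      q ^ (b * N ^ 2) *
        chainSum q N m (m + 1) (chainState q N ((baileyStep q⁻¹ 1)^[b] β)) := by
  induction b generalizing β with
  | zero => rw [zero_mul, pow_zero, one_mul, Function.iterate_zero_apply, add_zero]
  | succ b ih =>
    rw [← add_assoc, chainSum_succ_chainState hq0 hq, if_neg (by omega : m + 1 + b ≠ m),
      sub_zero, if_neg (by omega : ¬m + 1 + b < m), ih, ← mul_assoc, ← pow_add,
      Function.iterate_succ_apply, add_one_mul b, add_comm (N ^ 2)]

theorem chainSum_chainState_single (hq0 : q ≠ 0) (hq : ¬IsOfFinOrder q) {N : ℕ} (hN : N ≠ 0)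
    (m b : ℕ) :
    chainSum q N m (m + b + 1) (chainState q N (Pi.single 0 1)) =
      q ^ ((m + b + 1) * N ^ 2) * ((-1) ^ N * q⁻¹ ^ (-tri (N + 1)) * (1 - q⁻¹ ^ N) *
        ∑ r ∈ Icc (-(N : ℤ)) (N - 1), thetaCoeff q⁻¹ m (b + 1) r) := by
  have hx0 : q⁻¹ ≠ 0 := inv_ne_zero hq0
  have hx : ¬IsOfFinOrder q⁻¹ := not_isOfFinOrder_inv hq
  have hzero := chainState_baileyTransform (q := q) N 0 (thetaCoeff q⁻¹ m (b + 1))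
  have hone := chainState_baileyTransform (q := q) N 1 (thetaCoeff q⁻¹ 0 b)
  have hcancel : q ^ ((m + 1) * N ^ 2) * q⁻¹ ^ ((m + 1) * N ^ 2) = 1 := by
    rw [← mul_pow, mul_inv_cancel₀ hq0, one_pow]
  rw [← iterate_baileyStep_single hx0 hx, Nat.cast_zero, neg_zero] at hzero
  rw [← iterate_baileyStep_single hx0 hx, Function.iterate_zero_apply, Nat.cast_one] at hone
  rw [Nat.add_right_comm, chainSum_add_chainState hq0 hq, chainSum_succ_chainState hq0 hq,
    if_pos rfl, if_neg (lt_irrefl m), chainSum_chainState_of_le hq0 hq N le_rfl, hone,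
    ← Function.iterate_succ_apply' (baileyStep q⁻¹ 1), hzero,
    ← sum_thetaCoeff_mul_cyclotomicPairing hx0 hx hN]
  linear_combination (q ^ (b * N ^ 2) *
    ∑ r ∈ Icc (-(N : ℤ)) N, thetaCoeff q⁻¹ 0 b r * cyclotomicPairing q⁻¹ N 1 r) * hcancel

theorem one_sub_mul_sum_eq_chainSum (hq0 : q ≠ 0) (hq : ¬IsOfFinOrder q) {t m : ℕ} (hmt : m ≤ t)
    (N : ℕ) :
    (1 - q ^ N) * (1 - q ^ (-(N : ℤ))) *
        ∑ k : Fin (t + 1) → Fin (N + 1) with (∀ i : Fin t, k i.castSucc ≤ k i.succ) ∧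
            1 ≤ (k ⟨m, by omega⟩ : ℕ),
          qPoch q (q ^ (1 + (N : ℤ))) ((k (Fin.last t) : ℕ) - 1) *
            qPoch q (q ^ (1 - (N : ℤ))) ((k (Fin.last t) : ℕ) - 1) *
            q ^ (k (Fin.last t) : ℕ) * UtProdM q t m (fun i ↦ (k i : ℕ)) =
      chainSum q N m (t + 1) (chainState q N (Pi.single 0 1)) := by
  have hsummand (k : ℕ) (s : ℤ) (_ : 0 ≤ s) (hk : m < t + 1 → 1 ≤ k) :
      chainState q N (Pi.single 0 1) k s = (1 - q ^ N) * (1 - q ^ (-(N : ℤ))) *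
        (qPoch q (q ^ (1 + (N : ℤ))) (k - 1) * qPoch q (q ^ (1 - (N : ℤ))) (k - 1) * q ^ k) := by
    rw [chainState_single hq0, ← Nat.sub_add_cancel (hk (by omega)), cyclotomicWeight_succ' hq0,
      Nat.add_sub_cancel, zpow_natCast, mul_assoc]
  rw [chainSum_congr q N m (t + 1) hsummand, chainSum_succ_eq_sum hq, mul_sum]
  refine sum_congr (filter_congr fun k _ ↦ and_congr_right' ?_) fun k _ ↦ (mul_assoc _ _ _).symm
  exact ⟨fun h j hj ↦ by rwa [show j = ⟨m, by omega⟩ from Fin.ext hj], fun h ↦ h _ rfl⟩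

theorem thetaCoeff_inv (m b : ℕ) (r : ℤ) :
    thetaCoeff q⁻¹ m (b + 1) r = (-1) ^ r *
      q ^ (-(2 * ((m + b : ℕ) : ℤ) + 3) * r * (r + 1) / 2 + ((m : ℤ) + 1) * r) := by
  have hdiv : -(2 * ((m + b : ℕ) : ℤ) + 3) * r * (r + 1) / 2 =
      -(2 * ((m + b : ℕ) : ℤ) + 3) * tri (r + 1) :=
    Int.ediv_eq_of_eq_mul_right two_ne_zero (by
      linear_combination (2 * ((m + b : ℕ) : ℤ) + 3) * two_mul_tri (r + 1))
  rw [thetaCoeff, inv_zpow', hdiv]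
  congr 2
  push_cast
  linear_combination (m + b + 1 : ℤ) * two_mul_tri (r + 1) + tri_add_one r

theorem pow_mul_inv_zpow_neg_tri (hq0 : q ≠ 0) (t N : ℕ) :
    q ^ ((t + 1) * N ^ 2) * q⁻¹ ^ (-tri (N + 1)) =
      q ^ ((N : ℤ) * ((2 * (t : ℤ) + 3) * N + 1) / 2) := by
  have hdiv : (N : ℤ) * ((2 * (t : ℤ) + 3) * N + 1) / 2 = (t + 1) * N ^ 2 + tri (N + 1) :=
    Int.ediv_eq_of_eq_mul_right two_ne_zero (by linear_combination -two_mul_tri ((N : ℤ) + 1))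
  rw [hdiv, inv_zpow', neg_neg, ← zpow_natCast, ← zpow_add₀ hq0]
  push_cast
  rfl

end Evaluation

theorem stmt17_general (t m N : ℕ) (hmt : m ≤ t) (q : ℂ) (hq0 : q ≠ 0) (hq : ¬IsOfFinOrder q) :
    (1 - q ^ N) * q ^ (-(t : ℤ) - 1) *
      ∑ k ∈ Finset.univ.filter
          (fun k : Fin (t+1) → Fin (N+1) =>
            (∀ i : Fin t, k i.castSucc ≤ k i.succ) ∧ 1 ≤ (k ⟨m, by omega⟩ : ℕ)),
        qPoch q (q ^ (1 + (N : ℤ))) ((k (Fin.last t) : ℕ) - 1) *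
          qPoch q (q ^ (1 - (N : ℤ))) ((k (Fin.last t) : ℕ) - 1) *
          q ^ (k (Fin.last t) : ℕ) *
          UtProdM q t m (fun i => (k i : ℕ)) =
    (-1 : ℂ) ^ N * q ^ (-(t : ℤ) - 1 + (N : ℤ) * ((2 * (t : ℤ) + 3) * N + 1) / 2) *
      ∑ k ∈ Finset.Icc (-(N : ℤ)) ((N : ℤ) - 1),
        (-1 : ℂ) ^ k * q ^ (-(2 * (t : ℤ) + 3) * k * (k + 1) / 2 + ((m : ℤ) + 1) * k) := by
  obtain ⟨b, rfl⟩ := Nat.exists_eq_add_of_le hmt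
  rcases eq_or_ne N 0 with rfl | hN
  · simp
  have hsum := (one_sub_mul_sum_eq_chainSum hq0 hq hmt N).trans
    (chainSum_chainState_single hq0 hq hN m b)
  have hinv : q⁻¹ ^ N = q ^ (-(N : ℤ)) := by rw [zpow_neg, zpow_natCast, inv_pow]
  simp only [hinv, thetaCoeff_inv] at hsum
  have hcancel : 1 - q ^ (-(N : ℤ)) ≠ 0 := one_sub_zpow_ne_zero hq (by omega)
  refine mul_left_cancel₀ hcancel ?_
  rw [zpow_add₀ hq0 (-((m + b : ℕ) : ℤ) - 1), ← pow_mul_inv_zpow_neg_tri hq0]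
  linear_combination q ^ (-((m + b : ℕ) : ℤ) - 1) * hsum

/-- `(1-q^N)·U_t^{(m)}(-q^N;q)` equals the defining expression of the
analogue `(1-q^N)·J_N^{(t,m)}(q)` of the colored Jones polynomial; the paper's `t, m`
are `t+1, m+1` here (so `2t+1 = 2t+3`, and `k_M ≥ 1` is the 0-based coordinate `m`). -/
theorem stmt17 (t m N : ℕ) (hmt : m ≤ t) (hN : 1 ≤ N) (q : ℂ)
    (hq0 : 0 < ‖q‖) (hq1 : ‖q‖ < 1) :
    (1 - q ^ N) * q ^ (-(t : ℤ) - 1) *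
      ∑ k ∈ Finset.univ.filter
          (fun k : Fin (t+1) → Fin (N+1) =>
            (∀ i : Fin t, k i.castSucc ≤ k i.succ) ∧ 1 ≤ (k ⟨m, by omega⟩ : ℕ)),
        qPoch q (q ^ (1 + (N : ℤ))) ((k (Fin.last t) : ℕ) - 1) *
          qPoch q (q ^ (1 - (N : ℤ))) ((k (Fin.last t) : ℕ) - 1) *
          q ^ (k (Fin.last t) : ℕ) *
          UtProdM q t m (fun i => (k i : ℕ)) =
    (-1 : ℂ) ^ N * q ^ (-(t : ℤ) - 1 + (N : ℤ) * ((2 * (t : ℤ) + 3) * N + 1) / 2) *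
      ∑ k ∈ Finset.Icc (-(N : ℤ)) ((N : ℤ) - 1),
        (-1 : ℂ) ^ k * q ^ (-(2 * (t : ℤ) + 3) * k * (k + 1) / 2 + ((m : ℤ) + 1) * k) :=
  stmt17_general t m N hmt q (norm_pos_iff.1 hq0) fun h ↦ hq1.ne h.norm_eq_one
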